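/- Let n ≥ 2 be an integer, ν > 0, 0 < κ ≤ ν/(2^{n+1} a_n), and suppose 0 < α < ( (π/(2^{n+1} a_n)) · n/(n+1) − 1/2^n ) · (1/√(2n−1)) · (2n/(2n−1))^{n−1}. Define L_1(A) := (−κ cos A)/(ν − κ 2^n a_n) · ( α a_n √(2n−1) ((2n−1)/n)^{n−1} + I_n(A) ) and L_2(A) := (κ cos A)/(ν + κ 2^n a_n) · ( α a_n √(2n−1) ((2n−1)/n)^{n−1} − I_n(A) ). Then: (i) ∫_{π/2}^{3π/2} L_1(A) dA ≤ α √(2n−1) ((2n−1)/(2n))^{n−1} + 1/2^{n−1}; and (ii) ∫_{−π/2}^{π/2} L_2(A) dA + ∫_{π/2}^{3π/2} L_1(A) dA < 0. -/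

import Mathlib

open Real Filter

/-- Normalizing constant `a_n = 2^n (n!)^2 / (2n)!`. -/
noncomputable def aW (n : ℕ) : ℝ :=
  2 ^ n * (Nat.factorial n : ℝ) ^ 2 / (Nat.factorial (2 * n) : ℝ)

/-- Influence function `I_n(θ) = a_n (1 + cos θ)^n`. -/
noncomputable def influence (n : ℕ) (θ : ℝ) : ℝ := aW n * (1 + Real.cos θ) ^ n

/-- Sensitivity function `S(θ) = -sin θ`. -/
noncomputable def sens (θ : ℝ) : ℝ := -Real.sin θ

open intervalIntegral

lemma aW_pos (n : ℕ) : 0 < aW n := by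
  unfold aW; positivity

lemma aW_succ (n : ℕ) : aW (n + 1) * (2 * n + 1) = aW n * (n + 1) := by
  unfold aW
  have h : 2 * (n + 1) = (2 * n + 1) + 1 := by ring
  rw [h, Nat.factorial_succ (2 * n + 1), Nat.factorial_succ (2 * n), Nat.factorial_succ n]
  have : (Nat.factorial (2 * n) : ℝ) ≠ 0 := by positivity
  push_cast
  field_simp
  ring

lemma cos_int (n : ℕ) :
    (n + 1 : ℝ) * (∫ A in (-(π / 2))..(3 * π / 2), cos A * (1 + cos A) ^ n)
      = n * ∫ A in (-(π / 2))..(3 * π / 2), (1 + cos A) ^ n := by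
  have key : ∫ A in (-(π / 2))..(3 * π / 2),
      ((n + 1 : ℝ) * (cos A * (1 + cos A) ^ n) - n * (1 + cos A) ^ n)
      = sin (3 * π / 2) * (1 + cos (3 * π / 2)) ^ n
        - sin (-(π / 2)) * (1 + cos (-(π / 2))) ^ n := by
    apply integral_eq_sub_of_hasDerivAt (f := fun A => sin A * (1 + cos A) ^ n)
    · intro x _
      have h := (hasDerivAt_sin x).mul (((hasDerivAt_cos x).const_add 1).pow n)
      refine h.congr_deriv ?_
      try simp only [Pi.pow_apply]
      rcases n with _ | m
      · simp
      · have hs := sin_sq x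
        push_cast
        try simp only [Nat.add_sub_cancel]
        linear_combination (-(m + 1 : ℝ)) * (1 + cos x) ^ m * hs
    · apply Continuous.intervalIntegrable; fun_prop
  rw [integral_sub, integral_const_mul, integral_const_mul] at key
  · have h1 : (3 * π / 2) = π / 2 + π := by ring
    rw [h1] at key ⊢
    simp only [cos_neg, sin_neg, sin_add_pi, cos_add_pi, cos_pi_div_two, sin_pi_div_two] at key
    norm_num at key
    linarith
  · apply Continuous.intervalIntegrable; fun_prop
  · apply Continuous.intervalIntegrable; fun_prop

lemma norm_int (n : ℕ) :
    aW n * (∫ A in (-(π / 2))..(3 * π / 2), (1 + cos A) ^ n) = 2 * π := by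
  induction n with
  | zero => simp [aW]; ring
  | succ n ih =>
    have h := cos_int n
    have e : ∫ A in (-(π / 2))..(3 * π / 2), (1 + cos A) ^ (n + 1)
        = (∫ A in (-(π / 2))..(3 * π / 2), (1 + cos A) ^ n)
          + ∫ A in (-(π / 2))..(3 * π / 2), cos A * (1 + cos A) ^ n := by
      rw [← integral_add]
      · congr 1; ext A; ring
      · apply Continuous.intervalIntegrable; fun_prop
      · apply Continuous.intervalIntegrable; fun_prop
    rw [e]
    set C := ∫ A in (-(π / 2))..(3 * π / 2), (1 + cos A) ^ n
    set D := ∫ A in (-(π / 2))..(3 * π / 2), cos A * (1 + cos A) ^ n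
    have ha := aW_succ n
    have hn : (n + 1 : ℝ) ≠ 0 := by positivity
    apply mul_left_cancel₀ hn
    linear_combination aW (n + 1) * h + C * ha + (n + 1 : ℝ) * ih

lemma J_split (n : ℕ) :
    (∫ A in (-(π / 2))..(π / 2), cos A * influence n A)
      = 2 * π * (n / (n + 1)) + ∫ A in (π / 2)..(3 * π / 2), -cos A * influence n A := by
  have h1 : (∫ A in (-(π / 2))..(π / 2), cos A * influence n A)
      + (∫ A in (π / 2)..(3 * π / 2), cos A * influence n A)
      = ∫ A in (-(π / 2))..(3 * π / 2), cos A * influence n A := by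
    apply integral_add_adjacent_intervals <;>
    · apply Continuous.intervalIntegrable; unfold influence; fun_prop
  have h2 : (∫ A in (π / 2)..(3 * π / 2), -cos A * influence n A)
      = -∫ A in (π / 2)..(3 * π / 2), cos A * influence n A := by
    rw [← integral_neg]; congr 1; ext A; ring
  have h3 : (∫ A in (-(π / 2))..(3 * π / 2), cos A * influence n A)
      = aW n * ∫ A in (-(π / 2))..(3 * π / 2), cos A * (1 + cos A) ^ n := by
    rw [← integral_const_mul]; congr 1; ext A; unfold influence; ring
  have h4 := cos_int n
  have h5 := norm_int n
  rw [h2, ← sub_eq_iff_eq_add, sub_neg_eq_add, h1, h3]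
  generalize (∫ A in (-(π / 2))..(3 * π / 2), cos A * (1 + cos A) ^ n) = D at *
  generalize (∫ A in (-(π / 2))..(3 * π / 2), (1 + cos A) ^ n) = C at *
  have hn : (n + 1 : ℝ) ≠ 0 := by positivity
  field_simp
  linear_combination aW n * h4 + n * h5

lemma int_ncos : ∫ A in (π / 2)..(3 * π / 2), -cos A = 2 := by
  have h1 : (3 * π / 2) = π / 2 + π := by ring
  rw [integral_neg, integral_cos, h1, sin_add_pi, sin_pi_div_two]; norm_num

lemma J_le (n : ℕ) :
    (∫ A in (π / 2)..(3 * π / 2), -cos A * influence n A) ≤ 2 * aW n := by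
  have h0 : (∫ A in (π / 2)..(3 * π / 2), -cos A * aW n) = 2 * aW n := by
    rw [integral_mul_const, int_ncos]
  rw [← h0]
  apply integral_mono_on
  · linarith [pi_pos]
  · apply Continuous.intervalIntegrable; unfold influence; fun_prop
  · apply Continuous.intervalIntegrable; fun_prop
  · intro x hx
    have hc : cos x ≤ 0 :=
      cos_nonpos_of_pi_div_two_le_of_le hx.1 (by linarith [hx.2])
    have h1 : (1 + cos x) ^ n ≤ 1 :=
      pow_le_one₀ (by linarith [neg_one_le_cos x]) (by linarith)
    have := aW_pos n
    apply mul_le_mul_of_nonneg_left _ (by linarith)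
    unfold influence
    nlinarith

/-- Integral estimates for the comparison functions `L_1` and `L_2`. -/
theorem stmt18 (n : ℕ) (hn : 2 ≤ n) (ν κ α : ℝ) (hν : 0 < ν)
    (hκ0 : 0 < κ) (hκ : κ ≤ ν / (2 ^ (n + 1) * aW n))
    (hα0 : 0 < α)
    (hα : α < (Real.pi / (2 ^ (n + 1) * aW n) * ((n : ℝ) / ((n : ℝ) + 1))
                - 1 / 2 ^ n)
              * (1 / Real.sqrt (2 * (n : ℝ) - 1))
              * (2 * (n : ℝ) / (2 * (n : ℝ) - 1)) ^ (n - 1)) :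
    (∫ A in (Real.pi / 2)..(3 * Real.pi / 2),
        (-κ * Real.cos A) / (ν - κ * 2 ^ n * aW n) *
          (α * aW n * Real.sqrt (2 * (n : ℝ) - 1) *
              ((2 * (n : ℝ) - 1) / (n : ℝ)) ^ (n - 1) + influence n A))
      ≤ α * Real.sqrt (2 * (n : ℝ) - 1) *
          ((2 * (n : ℝ) - 1) / (2 * (n : ℝ))) ^ (n - 1) + 1 / 2 ^ (n - 1) ∧
    (∫ A in (-(Real.pi / 2))..(Real.pi / 2),
        (κ * Real.cos A) / (ν + κ * 2 ^ n * aW n) *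
          (α * aW n * Real.sqrt (2 * (n : ℝ) - 1) *
              ((2 * (n : ℝ) - 1) / (n : ℝ)) ^ (n - 1) - influence n A)) +
    (∫ A in (Real.pi / 2)..(3 * Real.pi / 2),
        (-κ * Real.cos A) / (ν - κ * 2 ^ n * aW n) *
          (α * aW n * Real.sqrt (2 * (n : ℝ) - 1) *
              ((2 * (n : ℝ) - 1) / (n : ℝ)) ^ (n - 1) + influence n A))
      < 0 := by
  have ha := aW_pos n
  have hn1 : (2 : ℝ) ≤ n := by exact_mod_cast hn
  have hs : 0 < Real.sqrt (2 * (n : ℝ) - 1) := Real.sqrt_pos.mpr (by linarith)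
  have hJ := J_le n
  have hsp := J_split n
  obtain ⟨a, hae⟩ : ∃ a, a = aW n := ⟨_, rfl⟩
  obtain ⟨r, hr⟩ : ∃ r, r = Real.sqrt (2 * (n : ℝ) - 1) := ⟨_, rfl⟩
  obtain ⟨q, hq⟩ : ∃ q, q = ((2 * (n : ℝ) - 1) / (2 * (n : ℝ))) ^ (n - 1) := ⟨_, rfl⟩
  obtain ⟨J, hJe⟩ : ∃ J, J = ∫ A in (π / 2)..(3 * π / 2), -cos A * influence n A := ⟨_, rfl⟩
  have hq0 : 0 < q := by
    rw [hq]; apply pow_pos; apply div_pos <;> linarith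
  have e1 : ((2 * (n : ℝ) - 1) / (n : ℝ)) ^ (n - 1) = 2 ^ (n - 1) * q := by
    rw [hq, ← mul_pow]; congr 1; field_simp
  have e2 : (2 * (n : ℝ) / (2 * (n : ℝ) - 1)) ^ (n - 1) = q⁻¹ := by
    rw [hq, ← inv_pow, inv_div]
  obtain ⟨t, ht⟩ : ∃ t : ℝ, t = 2 ^ (n - 1) := ⟨_, rfl⟩
  have ht0 : 0 < t := by rw [ht]; positivity
  have e3 : (2 : ℝ) ^ n = 2 * t := by
    rw [ht, ← pow_succ']; congr 1; omega
  have e4 : (2 : ℝ) ^ (n + 1) = 4 * t := by rw [pow_succ, e3]; ring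
  rw [e4, ← hae] at hκ
  rw [e2, e3, e4, ← hr, ← hae] at hα
  rw [← hae] at ha hJ
  rw [← hr] at hs
  rw [← hJe] at hsp hJ
  rw [e1, e3, ← hr, ← hq, ← hae, ← ht]
  have hp : κ * (2 * t) * a ≤ ν / 2 := by
    rw [le_div_iff₀ (by positivity)] at hκ
    linarith
  have hkp : 0 < κ * (2 * t) * a := by positivity
  have d1 : 0 < ν - κ * (2 * t) * a := by linarith
  have d2 : 0 < ν + κ * (2 * t) * a := by linarith
  obtain ⟨c, hc⟩ : ∃ c, c = α * a * r * (t * q) := ⟨_, rfl⟩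
  rw [← hc]
  have I1 : (∫ A in (π / 2)..(3 * π / 2),
      (-κ * cos A) / (ν - κ * (2 * t) * a) * (c + influence n A))
      = κ / (ν - κ * (2 * t) * a) * (2 * c + J) := by
    have h0 : (∫ A in (π / 2)..(3 * π / 2), -cos A * c) = 2 * c := by
      rw [integral_mul_const, int_ncos]
    rw [hJe, ← h0, ← integral_add, ← integral_const_mul]
    · congr 1; ext A; ring
    · apply Continuous.intervalIntegrable; fun_prop
    · apply Continuous.intervalIntegrable; unfold influence; fun_prop
  have I2 : (∫ A in (-(π / 2))..(π / 2),
      (κ * cos A) / (ν + κ * (2 * t) * a) * (c - influence n A))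
      = κ / (ν + κ * (2 * t) * a) * (2 * c - (2 * π * (n / (n + 1)) + J)) := by
    have h2 : ∫ A in (-(π / 2))..(π / 2), cos A = 2 := by
      rw [integral_cos, sin_neg, sin_pi_div_two]; norm_num
    have h0 : (∫ A in (-(π / 2))..(π / 2), cos A * c) = 2 * c := by
      rw [integral_mul_const, h2]
    rw [← hsp, ← h0, ← integral_sub, ← integral_const_mul]
    · congr 1; ext A; ring
    · apply Continuous.intervalIntegrable; fun_prop
    · apply Continuous.intervalIntegrable; unfold influence; fun_prop
  have hc0 : 0 < c := by rw [hc]; positivity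
  rw [I1, I2]
  constructor
  · calc κ / (ν - κ * (2 * t) * a) * (2 * c + J)
        ≤ κ / (ν - κ * (2 * t) * a) * (2 * c + 2 * a) := by
          apply mul_le_mul_of_nonneg_left _ (by positivity)
          linarith
      _ ≤ 1 / (2 * t * a) * (2 * c + 2 * a) := by
          apply mul_le_mul_of_nonneg_right _ (by positivity)
          rw [div_le_div_iff₀ d1 (by positivity)]
          linarith
      _ = α * r * q + 1 / t := by
          rw [hc]; field_simp
  · have hM : 8 * c + 4 * a < 2 * π * (n / (n + 1)) := by
      generalize ((n : ℝ) / (n + 1)) = m at hα ⊢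
      have h1 : α * r * q < π / (4 * t * a) * m - 1 / (2 * t) := by
        have := mul_lt_mul_of_pos_right hα (mul_pos hs hq0)
        have e : (π / (4 * t * a) * m - 1 / (2 * t)) * (1 / r) * q⁻¹ * (r * q)
          = π / (4 * t * a) * m - 1 / (2 * t) := by field_simp
        rw [e] at this
        linarith
      have h2 := mul_lt_mul_of_pos_right h1 (show 0 < 8 * t * a by positivity)
      have e : (π / (4 * t * a) * m - 1 / (2 * t)) * (8 * t * a) = 2 * π * m - 4 * a := by
        field_simp; ring
      rw [e] at h2
      rw [hc]
      nlinarith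
    have hJ0 : 0 ≤ J := by
      rw [hJe]
      apply integral_nonneg
      · linarith [pi_pos]
      · intro x hx
        have hcx : cos x ≤ 0 :=
          cos_nonpos_of_pi_div_two_le_of_le hx.1 (by linarith [hx.2])
        unfold influence
        have h3 : 0 ≤ 1 + cos x := by linarith [neg_one_le_cos x]
        have h4 := aW_pos n
        have h5 : 0 ≤ -cos x := by linarith
        positivity
    have hw : κ / (ν - κ * (2 * t) * a) ≤ 3 * (κ / (ν + κ * (2 * t) * a)) := by
      rw [← mul_div_assoc, div_le_div_iff₀ d1 d2]
      nlinarith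
    have hu : 0 < κ / (ν + κ * (2 * t) * a) := by positivity
    generalize κ / (ν - κ * (2 * t) * a) = w at hw
    generalize κ / (ν + κ * (2 * t) * a) = u at hw hu
    have g1 : w * (2 * c + J) ≤ 3 * u * (2 * c + J) :=
      mul_le_mul_of_nonneg_right hw (by positivity)
    have g2 : u * (8 * c + 2 * J - 2 * π * (n / (n + 1))) < 0 :=
      mul_neg_of_pos_of_neg hu (by linarith)
    linarith
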